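/- Define reals h_i^{(p)} (i = 1,…,N, p ≥ 1) by: h_1^{(1)} = 1/q_1; h_i^{(1)} = F̃_i·h_{i−1}^{(1)} + 1/q_i for i = 2,…,N; h_1^{(p)} = 0 for p ≥ 2; and h_i^{(p)} = F̃_i·(h_{i−1}^{(p)} + p·h_{i−1}^{(1)}·h_{i−1}^{(p−1)}) + Σ_{k=1}^{p−2} C(p,k)·h_{i−1}^{(k)}·h_i^{(p−k)} for i = 2,…,N and p ≥ 2, where C(p,k) is the binomial coefficient. Define H_i^{(p)} by H_i^{(1)} = h_i^{(1)} and H_i^{(p)} = h_i^{(p)} + Σ_{k=1}^{p−1} C(p−1,k)·h_i^{(k)}·H_i^{(p−k)} for p ≥ 2. Then for every positive integer p, Tr((B^⊤B)^{−p}) = (1/(p−1)!)·Σ_{i=1}^{N} H_i^{(p)}. -/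

import Mathlib

open Matrix

/-! Let `T = BᵀB` and let `Gᵢ = ∑ₚ hᵢ⁽ᵖ⁾ Xᵖ / p!`. The recurrence for `h` says exactly that the
series `wᵢ = 1 - Gᵢ` satisfy the quotient-difference relation
`qᵢ wᵢ + eᵢ₋₁ / wᵢ₋₁ = qᵢ + eᵢ₋₁ - X`. These are the relations under which `T - X` factors again as
a lower times an upper bidiagonal matrix, with pivots `qᵢ wᵢ`; hence `det (1 - X T⁻¹) = ∏ᵢ wᵢ`.

The recurrence for `H` says that `Kᵢ = ∑ₚ Hᵢ⁽ᵖ⁾ Xᵖ / p!` has derivative `Gᵢ' / (1 - Gᵢ)`, that is,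
`Kᵢ = -log wᵢ`. By Jacobi's formula `-log det (1 - X T⁻¹)` has derivative `∑ₚ tr (T⁻ᵖ⁻¹) Xᵖ`, so
comparing coefficients gives the trace formula. -/

open PowerSeries

section ProductRule

variable {ι R A : Type*} [CommSemiring R] [CommSemiring A] [Algebra R A] (D : Derivation R A A)

theorem derivation_prod [DecidableEq ι] (s : Finset ι) (f : ι → A) :
    D (∏ i ∈ s, f i) = ∑ i ∈ s, (∏ j ∈ s.erase i, f j) * D (f i) := by
  induction s using Finset.induction_on with
  | empty => simp
  | insert a s ha ih =>
    have herase : ∀ i ∈ s, ∏ j ∈ (insert a s).erase i, f j = f a * ∏ j ∈ s.erase i, f j := by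
      intro i hi
      rw [Finset.erase_insert_of_ne (ne_of_mem_of_not_mem hi ha).symm,
        Finset.prod_insert (by simp [ha])]
    rw [Finset.prod_insert ha, D.leibniz, ih, Finset.sum_insert ha, Finset.erase_insert ha,
      smul_eq_mul, smul_eq_mul, add_comm, Finset.mul_sum]
    congr 1
    exact Finset.sum_congr rfl fun i hi => by rw [herase i hi, mul_assoc]

theorem derivation_prod_of_forall_eq_mul (s : Finset ι) {f g : ι → A}
    (h : ∀ i ∈ s, D (f i) = f i * g i) : D (∏ i ∈ s, f i) = (∏ i ∈ s, f i) * ∑ i ∈ s, g i := by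
  classical
  rw [derivation_prod, Finset.mul_sum]
  refine Finset.sum_congr rfl fun i hi => ?_
  rw [h i hi, ← mul_assoc, Finset.prod_erase_mul _ _ hi]

end ProductRule

section Jacobi

variable {n R A : Type*} [Fintype n] [DecidableEq n] [CommSemiring R] [CommRing A] [Algebra R A]

theorem det_updateCol_eq_sum (M : Matrix n n A) (i : n) (v : n → A) :
    (M.updateCol i v).det =
      ∑ σ : Equiv.Perm n, σ.sign • ((∏ j ∈ Finset.univ.erase i, M (σ j) j) * v (σ i)) := by
  rw [det_apply]
  refine Finset.sum_congr rfl fun σ _ => ?_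
  rw [← Finset.prod_erase_mul _ _ (Finset.mem_univ i), updateCol_self]
  congr 2
  exact Finset.prod_congr rfl fun j hj => updateCol_ne (Finset.ne_of_mem_erase hj)

/-- Jacobi's formula. -/
theorem derivation_det (D : Derivation R A A) (M : Matrix n n A) :
    D M.det = trace (M.adjugate * M.map D) := by
  have hdiag (i : n) : (M.adjugate * M.map D) i i = (M.updateCol i fun k => D (M k i)).det := by
    rw [← cramer_apply, cramer_eq_adjugate_mulVec]
    rfl
  simp only [trace, diag_apply, hdiag, det_updateCol_eq_sum]
  rw [Finset.sum_comm, det_apply, map_sum]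
  refine Finset.sum_congr rfl fun σ _ => ?_
  rw [← Finset.smul_sum, ← derivation_prod, Units.smul_def, map_zsmul, Units.smul_def]

end Jacobi

section LogDet

variable {n R : Type*} [Fintype n] [DecidableEq n] [CommRing R]

theorem derivative_det_one_sub_X_smul (A : Matrix n n R) :
    d⁄dX R (1 - (X : R⟦X⟧) • A.map C).det =
      -((1 - (X : R⟦X⟧) • A.map C).det * mk fun p => trace (A ^ (p + 1))) := by
  set M : Matrix n n R⟦X⟧ := 1 - (X : R⟦X⟧) • A.map C with hM
  let S : Matrix n n R⟦X⟧ := of fun i j => mk fun p => (A ^ (p + 1)) i j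
  have hMS : M * S = A.map C := by
    ext i j p
    rw [hM, Matrix.sub_mul, Matrix.one_mul, Matrix.smul_mul]
    cases p with
    | zero => simp [S]
    | succ p =>
      simp [S, coeff_succ_X_mul, Matrix.mul_apply, pow_succ' A (p + 1)]
  have hderiv : M.map (d⁄dX R) = -A.map C := by
    ext1 i j
    by_cases hij : i = j <;> simp [hM, hij]
  have htrace : trace S = mk fun p => trace (A ^ (p + 1)) := by
    ext p
    simp [S, trace]
  rw [derivation_det, hderiv, Matrix.mul_neg, trace_neg, ← hMS, ← Matrix.mul_assoc,
    adjugate_mul, smul_mul, Matrix.one_mul, trace_smul, htrace, smul_eq_mul]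

end LogDet

section Bidiagonal

variable {R : Type*}

/-- The `N × N` upper bidiagonal matrix with diagonal `a 0, …, a (N - 1)` and superdiagonal
`b 0, …, b (N - 2)`; the remaining values of the sequences are ignored. -/
def upperBidiagonal [Zero R] (N : ℕ) (a b : ℕ → R) : Matrix (Fin N) (Fin N) R :=
  of fun i j => if (j : ℕ) = i then a i else if (j : ℕ) = i + 1 then b i else 0

theorem upperBidiagonal_apply [Zero R] {N : ℕ} (a b : ℕ → R) (i j : Fin N) :
    upperBidiagonal N a b i j =
      if (j : ℕ) = i then a i else if (j : ℕ) = i + 1 then b i else 0 := rfl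

theorem upperBidiagonal_map [NonAssocSemiring R] {S : Type*} [NonAssocSemiring S]
    (f : R →+* S) (N : ℕ) (a b : ℕ → R) :
    (upperBidiagonal N a b).map f = upperBidiagonal N (fun i => f (a i)) fun i => f (b i) := by
  ext i j
  simp only [map_apply, upperBidiagonal_apply, apply_ite f, map_zero]

theorem transpose_upperBidiagonal_mul_apply_zero [NonAssocSemiring R] {N : ℕ} (h0 : 0 < N)
    (c d : ℕ → R) (M : Matrix (Fin N) (Fin N) R) (j : Fin N) :
    ((upperBidiagonal N c d)ᵀ * M) ⟨0, h0⟩ j = c 0 * M ⟨0, h0⟩ j := by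
  rw [mul_apply, Finset.sum_eq_single ⟨0, h0⟩]
  · simp [upperBidiagonal_apply]
  · intro k _ hk
    rw [Ne, Fin.ext_iff] at hk
    simp [upperBidiagonal_apply, Ne.symm hk]
  · simp

theorem transpose_upperBidiagonal_mul_apply_succ [NonAssocSemiring R] {N i : ℕ} (hi : i + 1 < N)
    (c d : ℕ → R) (M : Matrix (Fin N) (Fin N) R) (j : Fin N) :
    ((upperBidiagonal N c d)ᵀ * M) ⟨i + 1, hi⟩ j =
      c (i + 1) * M ⟨i + 1, hi⟩ j + d i * M ⟨i, by omega⟩ j := by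
  rw [mul_apply, Finset.sum_eq_add (⟨i + 1, hi⟩ : Fin N) ⟨i, by omega⟩ (by simp)]
  · simp [upperBidiagonal_apply]
  · intro k _ hk
    simp only [ne_eq, Fin.ext_iff] at hk
    simp [upperBidiagonal_apply, Ne.symm hk.1, Ne.symm hk.2]
  · simp
  · simp

variable [CommRing R]

theorem det_upperBidiagonal (N : ℕ) (a b : ℕ → R) :
    (upperBidiagonal N a b).det = ∏ i : Fin N, a i := by
  rw [det_of_isUpperTriangular]
  · simp [upperBidiagonal_apply]
  · intro i j (hji : j < i)
    rw [upperBidiagonal_apply, if_neg (by omega), if_neg (by omega)]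

/-- One step of the shifted quotient-difference algorithm: the relations `h0` and `hs` are what
`w` has to satisfy for `CᵀB - x` to factor through bidiagonal matrices with pivots
`c i * a i * w i`. -/
theorem transpose_mul_upperBidiagonal_sub_smul_one {N : ℕ} (a b c d w v : ℕ → R) (x : R)
    (hvw : ∀ i, i + 1 < N → v i * w i = 1)
    (h0 : 0 < N → c 0 * a 0 * w 0 = c 0 * a 0 - x)
    (hs : ∀ i, i + 1 < N → c (i + 1) * a (i + 1) * w (i + 1) + d i * b i * v i =
      c (i + 1) * a (i + 1) + d i * b i - x) :
    (upperBidiagonal N c d)ᵀ * upperBidiagonal N a b - x • (1 : Matrix (Fin N) (Fin N) R) =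
      (upperBidiagonal N c fun i => d i * v i)ᵀ * upperBidiagonal N (fun i => a i * w i) b := by
  ext ⟨i, hi⟩ ⟨j, hj⟩
  cases i with
  | zero =>
    rw [Matrix.sub_apply, transpose_upperBidiagonal_mul_apply_zero,
      transpose_upperBidiagonal_mul_apply_zero]
    by_cases hj0 : j = 0
    · subst hj0
      simpa [upperBidiagonal_apply, mul_assoc] using (h0 hj).symm
    · simp [upperBidiagonal_apply, hj0, Ne.symm hj0, one_apply]
  | succ i =>
    rw [Matrix.sub_apply, transpose_upperBidiagonal_mul_apply_succ,
      transpose_upperBidiagonal_mul_apply_succ]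
    simp only [upperBidiagonal_apply, Matrix.smul_apply, one_apply, Fin.mk.injEq, smul_eq_mul]
    rcases eq_or_ne j (i + 1) with rfl | hdiag
    · simp only [if_true, Nat.succ_ne_self, if_false]
      linear_combination -hs i hi
    rcases eq_or_ne j i with rfl | hsub
    · simp only [if_true, Nat.ne_add_one, Nat.succ_ne_self, if_false]
      linear_combination -(d j * a j) * hvw j hi
    · simp [hdiag, hsub, Ne.symm hdiag]

theorem det_transpose_mul_upperBidiagonal_sub_smul_one {N : ℕ} (a b c d w v : ℕ → R) (x : R)
    (hvw : ∀ i, i + 1 < N → v i * w i = 1)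
    (h0 : 0 < N → c 0 * a 0 * w 0 = c 0 * a 0 - x)
    (hs : ∀ i, i + 1 < N → c (i + 1) * a (i + 1) * w (i + 1) + d i * b i * v i =
      c (i + 1) * a (i + 1) + d i * b i - x) :
    ((upperBidiagonal N c d)ᵀ * upperBidiagonal N a b - x • (1 : Matrix (Fin N) (Fin N) R)).det =
      ((upperBidiagonal N c d)ᵀ * upperBidiagonal N a b).det * ∏ i : Fin N, w i := by
  rw [transpose_mul_upperBidiagonal_sub_smul_one a b c d w v x hvw h0 hs]
  simp only [det_mul, det_transpose, det_upperBidiagonal, Finset.prod_mul_distrib, mul_assoc]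

end Bidiagonal

section ExponentialGeneratingFunction

variable {K : Type*} [Field K]

/-- The exponential generating function `∑ f p * Xᵖ / p!` of a sequence indexed by `p ≥ 1`; the
value `f 0` is ignored. -/
noncomputable def egf (f : ℕ → K) : K⟦X⟧ :=
  mk fun p => if p = 0 then 0 else f p / p.factorial

theorem coeff_egf (f : ℕ → K) {p : ℕ} (hp : p ≠ 0) : coeff p (egf f) = f p / p.factorial := by
  simp [egf, hp]

@[simp]
theorem constantCoeff_egf (f : ℕ → K) : constantCoeff (egf f) = 0 := by
  simp [egf, ← coeff_zero_eq_constantCoeff_apply]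

theorem coeff_egf_mul (f : ℕ → K) (φ : K⟦X⟧) (p : ℕ) :
    coeff p (egf f * φ) = ∑ k ∈ Finset.Icc 1 p, f k / k.factorial * coeff (p - k) φ := by
  rw [coeff_mul, Finset.Nat.sum_antidiagonal_eq_sum_range_succ_mk, Nat.range_succ_eq_Icc_zero,
    ← Finset.sum_subset (Finset.Icc_subset_Icc_left zero_le_one)]
  · refine Finset.sum_congr rfl fun k hk => ?_
    rw [coeff_egf f (Nat.one_le_iff_ne_zero.1 (Finset.mem_Icc.1 hk).1)]
  · intro k hk hk'
    obtain rfl : k = 0 := by simp only [Finset.mem_Icc] at hk hk'; omega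
    simp

theorem egf_eq_C_mul_X {f : ℕ → K} (hf : ∀ p, 2 ≤ p → f p = 0) : egf f = C (f 1) * X := by
  ext p
  rcases p with _ | _ | p
  · simp
  · simp [coeff_egf]
  · simp [coeff_egf, hf]

variable [CharZero K]

theorem coeff_derivative_egf (f : ℕ → K) (p : ℕ) :
    coeff p (d⁄dX K (egf f)) = f (p + 1) / p.factorial := by
  have hp : (p + 1 : K) ≠ 0 := p.cast_add_one_ne_zero
  rw [coeff_derivative, coeff_egf f p.succ_ne_zero, Nat.factorial_succ]
  push_cast
  field_simp

theorem coeff_succ_X_mul_egf (f : ℕ → K) {p : ℕ} (hp : p ≠ 0) :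
    coeff (p + 1) (X * egf f) = (p + 1 : ℕ) * f p / (p + 1).factorial := by
  rw [coeff_succ_X_mul, coeff_egf f hp, Nat.factorial_succ, Nat.cast_mul,
    mul_div_mul_left _ _ (Nat.cast_ne_zero.2 p.succ_ne_zero)]

theorem div_factorial_mul_div_factorial {p k : ℕ} (hk : k ≤ p) (x y : K) :
    x / k.factorial * (y / (p - k).factorial) = p.choose k * x * y / p.factorial := by
  have hfact (m : ℕ) : (m.factorial : K) ≠ 0 := Nat.cast_ne_zero.2 m.factorial_ne_zero
  have := hfact p
  have := hfact k
  have := hfact (p - k)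
  rw [Nat.cast_choose K hk]
  field_simp

theorem coeff_egf_mul_egf (f g : ℕ → K) (p : ℕ) :
    coeff p (egf f * egf g) =
      (∑ k ∈ Finset.Icc 1 (p - 1), (p.choose k : K) * f k * g (p - k)) / p.factorial := by
  rw [coeff_egf_mul, Finset.sum_div,
    ← Finset.sum_subset (Finset.Icc_subset_Icc_right (Nat.sub_le p 1))]
  · refine Finset.sum_congr rfl fun k hk => ?_
    rw [Finset.mem_Icc] at hk
    rw [coeff_egf g (by omega), div_factorial_mul_div_factorial (by omega)]
  · intro k hk hk'
    obtain rfl : k = p := by simp only [Finset.mem_Icc] at hk hk'; omega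
    simp

theorem coeff_egf_mul_derivative_egf (f g : ℕ → K) (p : ℕ) :
    coeff p (egf f * d⁄dX K (egf g)) =
      (∑ k ∈ Finset.Icc 1 p, (p.choose k : K) * f k * g (p + 1 - k)) / p.factorial := by
  rw [coeff_egf_mul, Finset.sum_div]
  refine Finset.sum_congr rfl fun k hk => ?_
  have hkp := (Finset.mem_Icc.1 hk).2
  rw [coeff_derivative_egf, div_factorial_mul_div_factorial hkp, Nat.sub_add_comm hkp]

/-- The recurrence for `g` encodes `egf g = -log (1 - egf f)`. -/
theorem derivative_egf_mul_one_sub_egf {f g : ℕ → K} (h1 : g 1 = f 1)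
    (hg : ∀ p, 2 ≤ p → g p = f p +
      ∑ k ∈ Finset.Icc 1 (p - 1), ((p - 1).choose k : K) * f k * g (p - k)) :
    d⁄dX K (egf g) * (1 - egf f) = d⁄dX K (egf f) := by
  suffices d⁄dX K (egf g) = d⁄dX K (egf f) + egf f * d⁄dX K (egf g) by linear_combination this
  ext p
  rw [map_add, coeff_egf_mul_derivative_egf, coeff_derivative_egf, coeff_derivative_egf, ← add_div]
  congr 1
  rcases p with _ | p
  · simpa using h1
  · exact hg (p + 2) (by omega)

end ExponentialGeneratingFunction

section QuotientDifference

variable {K : Type*} [Field K]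

theorem C_mul_one_sub_egf_eq {f : ℕ → K} {q : K} (hq : q ≠ 0) (h1 : f 1 = 1 / q)
    (hf : ∀ p, 2 ≤ p → f p = 0) : C q * (1 - egf f) = C q - X := by
  rw [egf_eq_C_mul_X hf, h1, mul_sub, mul_one, ← mul_assoc, ← map_mul, mul_one_div_cancel hq,
    map_one, one_mul]

variable [CharZero K]

theorem egf_eq_of_recurrence {f g : ℕ → K} {F r : K} (h1 : g 1 = F * f 1 + r)
    (hg : ∀ p, 2 ≤ p → g p = F * (f p + p * f 1 * f (p - 1)) +
      ∑ k ∈ Finset.Icc 1 (p - 2), (p.choose k : K) * f k * g (p - k)) :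
    egf g = C F * egf f + C r * X * (1 - egf f) + egf f * egf g := by
  ext p
  rcases p with _ | _ | p
  · simp
  · simp [coeff_egf, coeff_egf_mul_egf, mul_assoc, coeff_succ_X_mul, mul_sub, h1]
  · -- Adding the missing term `k = p + 1` to the sum replaces `F * f 1` by `F * f 1 - g 1 = -r`.
    have hfull : g (p + 2) = F * f (p + 2) - r * ((p + 2) * f (p + 1)) +
        ∑ k ∈ Finset.Icc 1 (p + 1), ((p + 2).choose k : K) * f k * g (p + 2 - k) := by
      rw [hg (p + 2) (by omega), Finset.sum_Icc_succ_top (by omega),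
        show p + 2 - (p + 1) = 1 by omega, h1, Nat.choose_succ_self_right]
      push_cast
      ring
    simp only [map_add, mul_assoc, mul_sub, mul_one, map_sub, coeff_C_mul, coeff_succ_X_mul_egf,
      coeff_egf_mul_egf, coeff_egf _ (Nat.succ_ne_zero _), coeff_X, hfull, Nat.succ_ne_zero,
      Nat.add_sub_cancel, Nat.add_eq_right, if_false, ne_eq, not_false_eq_true]
    push_cast
    ring

theorem qd_relation_of_recurrence {f g : ℕ → K} {q e : K} (hq : q ≠ 0)
    (h1 : g 1 = e / q * f 1 + 1 / q)
    (hg : ∀ p, 2 ≤ p → g p = e / q * (f p + p * f 1 * f (p - 1)) +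
      ∑ k ∈ Finset.Icc 1 (p - 2), (p.choose k : K) * f k * g (p - k)) :
    C q * (1 - egf g) + C e * (1 - egf f)⁻¹ = C q + C e - X := by
  have hinv : (1 - egf f)⁻¹ * (1 - egf f) = 1 := PowerSeries.inv_mul_cancel _ (by simp)
  have hF : (C q * C (e / q) : K⟦X⟧) = C e := by rw [← map_mul, mul_div_cancel₀ _ hq]
  have hr : (C q * C (1 / q) : K⟦X⟧) = 1 := by rw [← map_mul, mul_one_div_cancel hq, map_one]
  have hrec := egf_eq_of_recurrence h1 hg
  linear_combination (-(1 - egf f)⁻¹ * C q) * hrec + (C q * egf g + C e - X) * hinv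
    - ((1 - egf f)⁻¹ * (1 - egf f) * X) * hr - (egf f * (1 - egf f)⁻¹) * hF

end QuotientDifference

section TraceFormula

variable {K : Type*} [Field K]

theorem det_one_sub_X_smul_inv_eq_prod {N : ℕ} {a b c d : ℕ → K} {w : ℕ → K⟦X⟧}
    (hca : ∀ i, i < N → c i * a i ≠ 0) (hw : ∀ i, i + 1 < N → constantCoeff (w i) ≠ 0)
    (h0 : 0 < N → C (c 0 * a 0) * w 0 = C (c 0 * a 0) - X)
    (hs : ∀ i, i + 1 < N → C (c (i + 1) * a (i + 1)) * w (i + 1) + C (d i * b i) * (w i)⁻¹ =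
      C (c (i + 1) * a (i + 1)) + C (d i * b i) - X) :
    (1 - (X : K⟦X⟧) • (((upperBidiagonal N c d)ᵀ * upperBidiagonal N a b)⁻¹).map C).det =
      ∏ i : Fin N, w i := by
  set T := (upperBidiagonal N c d)ᵀ * upperBidiagonal N a b with hT
  have hdetT : T.det ≠ 0 := by
    simp only [hT, det_mul, det_transpose, det_upperBidiagonal, ← Finset.prod_mul_distrib,
      Finset.prod_ne_zero_iff]
    exact fun i _ => hca i i.2
  have hmapT : T.map C = (upperBidiagonal N (fun i => C (c i)) fun i => C (d i))ᵀ *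
      upperBidiagonal N (fun i => (C (a i) : K⟦X⟧)) fun i => C (b i) := by
    rw [hT, Matrix.map_mul, transpose_map, upperBidiagonal_map, upperBidiagonal_map]
  have hshift : T.map C * (1 - (X : K⟦X⟧) • T⁻¹.map C) = T.map C - (X : K⟦X⟧) • 1 := by
    rw [Matrix.mul_sub, Matrix.mul_one, Matrix.mul_smul, ← Matrix.map_mul,
      mul_nonsing_inv _ (isUnit_iff_ne_zero.2 hdetT), Matrix.map_one _ (map_zero _) (map_one _)]
  have hdet : (T.map C - (X : K⟦X⟧) • 1).det = (T.map C).det * ∏ i : Fin N, w i := by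
    simp only [map_mul] at h0 hs
    rw [hmapT]
    exact det_transpose_mul_upperBidiagonal_sub_smul_one _ _ _ _ w (fun i => (w i)⁻¹) X
      (fun i hi => PowerSeries.inv_mul_cancel _ (hw i hi)) h0 hs
  have hdetmapT : (T.map C : Matrix (Fin N) (Fin N) K⟦X⟧).det ≠ 0 := by
    rw [← RingHom.mapMatrix_apply, ← RingHom.map_det]
    simpa using hdetT
  rw [← hshift, det_mul] at hdet
  exact mul_left_cancel₀ hdetmapT hdet

variable [CharZero K]

theorem trace_pow_succ_eq_of_det_one_sub_X_smul_eq_prod {n ι : Type*} [Fintype n] [DecidableEq n]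
    [Fintype ι] (A : Matrix n n K) (f g : ι → ℕ → K)
    (hdet : (1 - (X : K⟦X⟧) • A.map C).det = ∏ i, (1 - egf (f i)))
    (hfg : ∀ i, d⁄dX K (egf (g i)) * (1 - egf (f i)) = d⁄dX K (egf (f i))) (p : ℕ) :
    trace (A ^ (p + 1)) = 1 / p.factorial * ∑ i, g i (p + 1) := by
  have hprod : ∏ i, (1 - egf (f i)) ≠ 0 := by
    refine Finset.prod_ne_zero_iff.2 fun i _ h0 => ?_
    simpa using congrArg constantCoeff h0
  have hlog : d⁄dX K (∏ i, (1 - egf (f i))) =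
      (∏ i, (1 - egf (f i))) * ∑ i, -d⁄dX K (egf (g i)) :=
    derivation_prod_of_forall_eq_mul _ _ fun i _ => by
      rw [map_sub, derivative_one, ← hfg]
      ring
  have htrace := derivative_det_one_sub_X_smul A
  rw [hdet, hlog, Finset.sum_neg_distrib, mul_neg, neg_inj] at htrace
  have hcoeff := congrArg (coeff p) (mul_left_cancel₀ hprod htrace)
  simp only [map_sum, coeff_derivative_egf, coeff_mk] at hcoeff
  rw [← hcoeff, ← Finset.sum_div, one_div_mul_eq_div]

theorem stmt_4_general (N : ℕ) (a b c d q e : ℕ → K)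
    (hca : ∀ i, i < N → c i * a i = q i) (hdb : ∀ i, i + 1 < N → d i * b i = e i)
    (hq : ∀ i, i < N → q i ≠ 0) (h H : ℕ → ℕ → K)
    (hh1a : h 1 0 = 1 / q 0)
    (hh1b : ∀ i, 0 < i → i < N → h 1 i = e (i - 1) / q i * h 1 (i - 1) + 1 / q i)
    (hhp0 : ∀ p, 2 ≤ p → h p 0 = 0)
    (hhp : ∀ p, 2 ≤ p → ∀ i, 0 < i → i < N →
      h p i = e (i - 1) / q i * (h p (i - 1) + p * h 1 (i - 1) * h (p - 1) (i - 1))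
        + ∑ k ∈ Finset.Icc 1 (p - 2), (p.choose k : K) * h k (i - 1) * h (p - k) i)
    (hH1 : ∀ i, i < N → H 1 i = h 1 i)
    (hHp : ∀ p, 2 ≤ p → ∀ i, i < N →
      H p i = h p i + ∑ k ∈ Finset.Icc 1 (p - 1), ((p - 1).choose k : K) * h k i * H (p - k) i)
    (p : ℕ) (hp : 1 ≤ p) :
    trace (((upperBidiagonal N c d)ᵀ * upperBidiagonal N a b)⁻¹ ^ p) =
      1 / ((p - 1).factorial : K) * ∑ i ∈ Finset.range N, H p i := by
  have hdet : (1 - (X : K⟦X⟧) • (((upperBidiagonal N c d)ᵀ * upperBidiagonal N a b)⁻¹).map C).det =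
      ∏ i : Fin N, (1 - egf fun p => h p i) := by
    refine det_one_sub_X_smul_inv_eq_prod (w := fun i => 1 - egf fun p => h p i)
      (fun i hi => hca i hi ▸ hq i hi) (fun i _ => by simp) (fun h0 => ?_) (fun i hi => ?_)
    · rw [hca 0 h0]
      exact C_mul_one_sub_egf_eq (hq 0 h0) hh1a hhp0
    · rw [hca _ hi, hdb i hi]
      exact qd_relation_of_recurrence (hq _ hi) (hh1b _ i.succ_pos hi)
        fun p hp => hhp p hp _ i.succ_pos hi
  have hlog (i : Fin N) : d⁄dX K (egf fun p => H p i) * (1 - egf fun p => h p i) =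
      d⁄dX K (egf fun p => h p i) :=
    derivative_egf_mul_one_sub_egf (hH1 i i.2) fun p hp => hHp p hp i i.2
  obtain ⟨p, rfl⟩ := Nat.exists_eq_add_of_le' hp
  rw [Nat.add_sub_cancel, ← Fin.sum_univ_eq_sum_range]
  exact trace_pow_succ_eq_of_det_one_sub_X_smul_eq_prod _ _ _ hdet hlog p

end TraceFormula

/-- the formula of Yamashita–Kimura–Yamamoto
`Tr((BᵀB)^{-p}) = (1/(p-1)!) Σ_i H_i^{(p)}`. Indices are 0-based:
the paper's 1-based `h_i^{(p)}` is `h p (i-1)`; `F̃_i = e_{i-1}/q_i` is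
`e (i-2) / q (i-1)`. -/
theorem stmt_4 (N : ℕ) (hN : 0 < N) (q e : ℕ → ℝ)
    (hq : ∀ i, i < N → 0 < q i) (he : ∀ i, i + 1 < N → 0 < e i)
    (B : Matrix (Fin N) (Fin N) ℝ)
    (hB : ∀ i j : Fin N, B i j =
      if (j : ℕ) = (i : ℕ) then Real.sqrt (q i)
      else if (j : ℕ) = (i : ℕ) + 1 then Real.sqrt (e i) else 0)
    (h H : ℕ → ℕ → ℝ)
    (hh1a : h 1 0 = 1 / q 0)
    (hh1b : ∀ i, 0 < i → i < N → h 1 i = e (i - 1) / q i * h 1 (i - 1) + 1 / q i)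
    (hhp0 : ∀ p, 2 ≤ p → h p 0 = 0)
    (hhp : ∀ p, 2 ≤ p → ∀ i, 0 < i → i < N →
      h p i = e (i - 1) / q i * (h p (i - 1) + p * h 1 (i - 1) * h (p - 1) (i - 1))
        + ∑ k ∈ Finset.Icc 1 (p - 2), (p.choose k : ℝ) * h k (i - 1) * h (p - k) i)
    (hH1 : ∀ i, i < N → H 1 i = h 1 i)
    (hHp : ∀ p, 2 ≤ p → ∀ i, i < N →
      H p i = h p i + ∑ k ∈ Finset.Icc 1 (p - 1), ((p - 1).choose k : ℝ) * h k i * H (p - k) i) :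
    ∀ p, 1 ≤ p →
      Matrix.trace ((Bᵀ * B)⁻¹ ^ p)
        = 1 / (Nat.factorial (p - 1) : ℝ) * ∑ i ∈ Finset.range N, H p i := by
  obtain rfl : B = upperBidiagonal N (fun i => √(q i)) fun i => √(e i) := ext hB
  exact stmt_4_general N _ _ _ _ q e (fun i hi => Real.mul_self_sqrt (hq i hi).le)
    (fun i hi => Real.mul_self_sqrt (he i hi).le) (fun i hi => (hq i hi).ne')
    h H hh1a hh1b hhp0 hhp hH1 hHp
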